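/- For every even positive integer n, 16·T(1,10,15;n) = 3·N(1,10,15;8n+26) − N(1,10,15;4(8n+26)). -/

import Mathlib

/-!
Put `m = 8 * n + 26`; since `n` is even, `m = 16 * k + 10`. Completing squares, `8 * T n` counts the
solutions of `x² + 10y² + 15z² = m` with `x, y, z` odd (`ncard_odd`), which are the solutions with
`x` odd. The remaining ones have `x, z` even, hence `N m = 8 * T n + #E`, where `E` is the solution
set of `4x² + 10y² + 60z² = m`. Likewise the solutions of `x² + 10y² + 15z² = 4m` with `x` even are
twice the solutions for `m`, so `N (4m) = N m + #B`, where `B` consists of the solutions with `x`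
odd. The claim is therefore equivalent to `#B = 2 * #E`.

The form `x² + 15z²` is a norm from `ℚ(√-15)`, where `2` splits into two primes of order two in the
class group; the choice of one of these primes produces the factor `2`.

* Solutions in `B` with `4 ∤ y` have `64 ∣ x² + 15z²`, so `x ≡ ±7z (mod 32)`. Those with
  `x ≡ -7z` are matched, by multiplication by `((1 + √-15) / 2)²`, with the points of `E` having
  `4 ∤ x + z` (`ncard_B_one`).
* Solutions in `B` with `4 ∣ y` satisfy exactly one of `4 ∣ x + z` and `4 ∣ x - z`. Those with
  `4 ∣ x + z` are matched with the points of `E` having `4 ∣ x + z`, because both are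
  parametrized by the solutions of `12a² + 20b² + 5c² = m / 2` (`ncard_B_two`).
-/

/-- Number of representations of `n` as `a*x^2 + b*y^2 + c*z^2` with `x,y,z : ℤ`. -/
noncomputable def N (a b c n : ℕ) : ℕ :=
  Nat.card {p : ℤ × ℤ × ℤ //
    (a : ℤ) * p.1 ^ 2 + (b : ℤ) * p.2.1 ^ 2 + (c : ℤ) * p.2.2 ^ 2 = (n : ℤ)}

/-- Number of representations of `n` as `a*x(x+1)/2 + b*y(y+1)/2 + c*z(z+1)/2` with `x,y,z : ℕ`. -/
noncomputable def T (a b c n : ℕ) : ℕ :=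
  Nat.card {p : ℕ × ℕ × ℕ //
    a * (p.1 * (p.1 + 1) / 2) + b * (p.2.1 * (p.2.1 + 1) / 2)
      + c * (p.2.2 * (p.2.2 + 1) / 2) = n}

/-- The integer solutions `(x, y, z)` of `a * x ^ 2 + b * y ^ 2 + c * z ^ 2 = m`. -/
def sols (a b c m : ℤ) : Set (ℤ × ℤ × ℤ) :=
  {p | a * p.1 ^ 2 + b * p.2.1 ^ 2 + c * p.2.2 ^ 2 = m}

theorem mem_sols {a b c m x y z : ℤ} :
    (x, y, z) ∈ sols a b c m ↔ a * x ^ 2 + b * y ^ 2 + c * z ^ 2 = m := Iff.rfl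

theorem finite_sols {a b c : ℤ} (m : ℤ) (ha : 0 < a) (hb : 0 < b) (hc : 0 < c) :
    (sols a b c m).Finite := by
  apply ((Set.finite_Icc (-m) m).prod
    ((Set.finite_Icc (-m) m).prod (Set.finite_Icc (-m) m))).subset
  rintro ⟨x, y, z⟩ h
  rw [mem_sols] at h
  have key : ∀ t d : ℤ, 0 < d → t ≤ d * t ^ 2 ∧ -t ≤ d * t ^ 2 ∧ 0 ≤ d * t ^ 2 := by
    intro t d hd
    have h1 : t ^ 2 ≤ d * t ^ 2 := le_mul_of_one_le_left (sq_nonneg t) hd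
    have h2 := Int.le_self_sq t
    have h3 := Int.le_self_sq (-t)
    rw [neg_sq] at h3
    exact ⟨by linarith, by linarith, by nlinarith [sq_nonneg t]⟩
  have hx := key x a ha
  have hy := key y b hb
  have hz := key z c hc
  simp only [Set.mem_prod, Set.mem_Icc]
  refine ⟨⟨?_, ?_⟩, ⟨?_, ?_⟩, ⟨?_, ?_⟩⟩ <;> linarith

theorem ncard_split {α : Type*} {S : Set α} (hS : S.Finite) (P : α → Prop) :
    S.ncard = {p ∈ S | P p}.ncard + {p ∈ S | ¬ P p}.ncard := by
  have hd : Disjoint {p ∈ S | P p} {p ∈ S | ¬ P p} := by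
    rw [Set.disjoint_left]
    rintro p ⟨_, h⟩ ⟨_, h'⟩
    exact h' h
  rw [← Set.ncard_union_eq hd (hS.subset (Set.sep_subset _ _)) (hS.subset (Set.sep_subset _ _))]
  congr 1
  ext p
  by_cases h : P p <;> simp [h]

/-- An involution of a finite set exchanging `P` and its negation makes `P` hold on exactly half of
the set. -/
theorem ncard_half {α : Type*} {S : Set α} (hS : S.Finite) (P : α → Prop) (σ : α → α)
    (hσ : ∀ p, σ (σ p) = p) (hm : ∀ p ∈ S, σ p ∈ S) (hP : ∀ p ∈ S, P (σ p) ↔ ¬ P p) :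
    S.ncard = 2 * {p ∈ S | P p}.ncard := by
  have h : {p ∈ S | P p}.ncard = {p ∈ S | ¬ P p}.ncard := by
    apply Set.ncard_congr (fun p _ => σ p)
    · rintro p ⟨h1, h2⟩
      exact ⟨hm p h1, fun h3 => (hP p h1).1 h3 h2⟩
    · intro p q _ _ hpq
      rw [← hσ p, ← hσ q, hpq]
    · rintro p ⟨h1, h2⟩
      exact ⟨σ p, ⟨hm p h1, (hP p h1).2 h2⟩, hσ p⟩
  rw [ncard_split hS P, ← h, two_mul]

theorem odd_sq {x : ℤ} (h : x % 2 = 1) : ∃ k, x ^ 2 = 8 * k + 1 := by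
  obtain ⟨k, hk⟩ := Int.eight_dvd_sq_sub_one_of_odd (Int.odd_iff.2 h)
  exact ⟨k, by linarith⟩

theorem even_sq {x : ℤ} (h : x % 2 = 0) : ∃ k, x ^ 2 = 4 * k := by
  obtain ⟨k, rfl⟩ := Int.dvd_of_emod_eq_zero h
  exact ⟨k ^ 2, by ring⟩

/-- `7` is a square root of `-15` modulo `64`, and modulo `32` it determines all of them up to
sign. -/
theorem dvd_of_sq {x z : ℤ} (hx : x % 2 = 1) (hz : z % 2 = 1) (h : (64 : ℤ) ∣ x ^ 2 + 15 * z ^ 2) :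
    (32 : ℤ) ∣ x + 7 * z ∨ (32 : ℤ) ∣ x - 7 * z := by
  obtain ⟨u, hu⟩ : ∃ u, x + 7 * z = 2 * u := ⟨(x + 7 * z) / 2, by omega⟩
  obtain ⟨v, hv⟩ : ∃ v, x - 7 * z = 2 * v := ⟨(x - 7 * z) / 2, by omega⟩
  obtain ⟨t, ht⟩ := h
  have huv : (16 : ℤ) ∣ u * v := ⟨t - z ^ 2, by nlinarith [congrArg₂ (· * ·) hu hv]⟩
  have key : ∀ w : ℤ, w % 2 = 1 → IsCoprime (16 : ℤ) w := by
    intro w hw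
    have : IsCoprime ((2 : ℤ) ^ 4) w := by
      apply IsCoprime.pow_left
      exact ⟨-(w / 2), 1, by omega⟩
    simpa using this
  rcases Int.emod_two_eq_zero_or_one u with h0 | h1
  · left
    have := (key v (by omega)).dvd_of_dvd_mul_right huv
    omega
  · right
    have := (key u h1).dvd_of_dvd_mul_left huv
    omega

/-! ### Parity of the solutions -/

theorem parity_m {k x y z : ℤ} (h : 1 * x ^ 2 + 10 * y ^ 2 + 15 * z ^ 2 = 16 * k + 10) :
    x % 2 = z % 2 ∧ y % 2 = 1 := by
  rcases Int.emod_two_eq_zero_or_one x with hx | hx <;>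
  rcases Int.emod_two_eq_zero_or_one y with hy | hy <;>
  rcases Int.emod_two_eq_zero_or_one z with hz | hz <;>
  first
  | omega
  | (first | obtain ⟨a, ha⟩ := even_sq hx | obtain ⟨a, ha⟩ := odd_sq hx)
    (first | obtain ⟨b, hb⟩ := even_sq hy | obtain ⟨b, hb⟩ := odd_sq hy)
    (first | obtain ⟨c, hc⟩ := even_sq hz | obtain ⟨c, hc⟩ := odd_sq hz)
    rw [ha, hb, hc] at h
    omega

theorem parity_four_m {k x y z : ℤ} (h : 1 * x ^ 2 + 10 * y ^ 2 + 15 * z ^ 2 = 4 * (16 * k + 10)) :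
    x % 2 = z % 2 ∧ y % 2 = 0 := by
  rcases Int.emod_two_eq_zero_or_one x with hx | hx <;>
  rcases Int.emod_two_eq_zero_or_one y with hy | hy <;>
  rcases Int.emod_two_eq_zero_or_one z with hz | hz <;>
  first
  | omega
  | (first | obtain ⟨a, ha⟩ := even_sq hx | obtain ⟨a, ha⟩ := odd_sq hx)
    (first | obtain ⟨b, hb⟩ := even_sq hy | obtain ⟨b, hb⟩ := odd_sq hy)
    (first | obtain ⟨c, hc⟩ := even_sq hz | obtain ⟨c, hc⟩ := odd_sq hz)
    rw [ha, hb, hc] at h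
    omega

theorem parity_E {k x y z : ℤ} (h : 4 * x ^ 2 + 10 * y ^ 2 + 60 * z ^ 2 = 16 * k + 10) :
    x % 2 = z % 2 ∧ y % 2 = 1 := by
  rcases Int.emod_two_eq_zero_or_one x with hx | hx <;>
  rcases Int.emod_two_eq_zero_or_one y with hy | hy <;>
  rcases Int.emod_two_eq_zero_or_one z with hz | hz <;>
  first
  | omega
  | (first | obtain ⟨a, ha⟩ := even_sq hx | obtain ⟨a, ha⟩ := odd_sq hx)
    (first | obtain ⟨b, hb⟩ := even_sq hy | obtain ⟨b, hb⟩ := odd_sq hy)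
    (first | obtain ⟨c, hc⟩ := even_sq hz | obtain ⟨c, hc⟩ := odd_sq hz)
    rw [ha, hb, hc] at h
    omega

/-! ### Solutions with `x` even -/

theorem ncard_even_m (k : ℤ) :
    {p ∈ sols 1 10 15 (16 * k + 10) | ¬ p.1 % 2 = 1}.ncard
      = (sols 4 10 60 (16 * k + 10)).ncard := by
  symm
  apply Set.ncard_congr (fun p _ => (2 * p.1, p.2.1, 2 * p.2.2))
  · rintro ⟨x, y, z⟩ h
    rw [mem_sols] at h
    refine ⟨?_, ?_⟩
    · rw [mem_sols]
      linarith
    · simp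
  · rintro ⟨x, y, z⟩ ⟨x', y', z'⟩ _ _ h
    simp only [Prod.mk.injEq] at h ⊢
    omega
  · rintro ⟨x, y, z⟩ ⟨h, hx⟩
    rw [mem_sols] at h
    obtain ⟨h1, h2⟩ := parity_m h
    dsimp only at hx
    obtain ⟨a, rfl⟩ : ∃ a, x = 2 * a := ⟨x / 2, by omega⟩
    obtain ⟨c, rfl⟩ : ∃ c, z = 2 * c := ⟨z / 2, by omega⟩
    exact ⟨(a, y, c), by rw [mem_sols]; linarith, rfl⟩

theorem ncard_even_four_m (k : ℤ) :
    {p ∈ sols 1 10 15 (4 * (16 * k + 10)) | ¬ p.1 % 2 = 1}.ncard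
      = (sols 1 10 15 (16 * k + 10)).ncard := by
  symm
  apply Set.ncard_congr (fun p _ => (2 * p.1, 2 * p.2.1, 2 * p.2.2))
  · rintro ⟨x, y, z⟩ h
    rw [mem_sols] at h
    refine ⟨?_, ?_⟩
    · rw [mem_sols]
      linarith
    · simp
  · rintro ⟨x, y, z⟩ ⟨x', y', z'⟩ _ _ h
    simp only [Prod.mk.injEq] at h ⊢
    omega
  · rintro ⟨x, y, z⟩ ⟨h, hx⟩
    rw [mem_sols] at h
    obtain ⟨h1, h2⟩ := parity_four_m h
    dsimp only at hx
    obtain ⟨a, rfl⟩ : ∃ a, x = 2 * a := ⟨x / 2, by omega⟩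
    obtain ⟨b, rfl⟩ : ∃ b, y = 2 * b := ⟨y / 2, by omega⟩
    obtain ⟨c, rfl⟩ : ∃ c, z = 2 * c := ⟨z / 2, by omega⟩
    exact ⟨(a, b, c), by rw [mem_sols]; linarith, rfl⟩

/-! ### Solutions for `4m` with `x` odd -/

/-- The solutions `(x, y, z)` of `x ^ 2 + 10 * y ^ 2 + 15 * z ^ 2 = 4 * (16 * k + 10)` with `x`
odd. -/
def solsB (k : ℤ) : Set (ℤ × ℤ × ℤ) :=
  {p ∈ sols 1 10 15 (4 * (16 * k + 10)) | p.1 % 2 = 1}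

theorem mem_solsB {k x y z : ℤ} :
    (x, y, z) ∈ solsB k ↔
      1 * x ^ 2 + 10 * y ^ 2 + 15 * z ^ 2 = 4 * (16 * k + 10) ∧ x % 2 = 1 := Iff.rfl

theorem finite_solsB (k : ℤ) : (solsB k).Finite :=
  (finite_sols _ (by norm_num) (by norm_num) (by norm_num)).subset (Set.sep_subset _ _)

theorem ncard_B_one_half (k : ℤ) :
    {p ∈ solsB k | ¬ 4 ∣ p.2.1}.ncard
      = 2 * {p ∈ {p ∈ solsB k | ¬ 4 ∣ p.2.1} | 32 ∣ p.1 + 7 * p.2.2}.ncard := by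
  apply ncard_half ((finite_solsB k).subset (Set.sep_subset _ _)) _
    (fun p => (p.1, p.2.1, -p.2.2))
  · simp
  · rintro ⟨x, y, z⟩ ⟨h, hy⟩
    rw [mem_solsB] at h
    refine ⟨?_, hy⟩
    rw [mem_solsB]
    simpa using h
  · rintro ⟨x, y, z⟩ ⟨h, hy⟩
    rw [mem_solsB] at h
    obtain ⟨h, hx⟩ := h
    obtain ⟨h1, h2⟩ := parity_four_m h
    dsimp only at hy ⊢
    obtain ⟨b, rfl⟩ : ∃ b, y = 2 * b := ⟨y / 2, by omega⟩
    obtain ⟨c, hc⟩ := odd_sq (x := b) (by omega)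
    have h64 : (64 : ℤ) ∣ x ^ 2 + 15 * z ^ 2 := ⟨k - 5 * c, by
      rw [mul_pow, hc] at h
      linarith⟩
    rcases dvd_of_sq hx (by omega) h64 with h3 | h3 <;> omega

/-- The bijection is multiplication of `x + z√-15` by `((1 + √-15) / 2) ^ 2 = (-7 + √-15) / 2`. -/
theorem ncard_B_one (k : ℤ) :
    {p ∈ {p ∈ solsB k | ¬ 4 ∣ p.2.1} | 32 ∣ p.1 + 7 * p.2.2}.ncard
      = {p ∈ sols 4 10 60 (16 * k + 10) | ¬ 4 ∣ p.1 + p.2.2}.ncard := by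
  symm
  apply Set.ncard_congr
    (fun p _ => (-7 * ((p.1 + p.2.2) / 2) - 4 * p.2.2, 2 * p.2.1, (p.1 + p.2.2) / 2 - 4 * p.2.2))
  · rintro ⟨x, y, z⟩ ⟨h, hxz⟩
    rw [mem_sols] at h
    obtain ⟨h1, h2⟩ := parity_E h
    dsimp only at hxz
    obtain ⟨r, hr⟩ : ∃ r, x = 2 * r - z := ⟨(x + z) / 2, by omega⟩
    subst hr
    have hr : (2 * r - z + z) / 2 = r := by omega
    dsimp only
    rw [hr]
    refine ⟨⟨mem_solsB.2 ⟨by linarith, by omega⟩, ?_⟩, ?_⟩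
    · dsimp only; omega
    · dsimp only; omega
  · rintro ⟨x, y, z⟩ ⟨x', y', z'⟩ ⟨h, _⟩ ⟨h', _⟩ heq
    have h1 := parity_E (mem_sols.1 h)
    have h2 := parity_E (mem_sols.1 h')
    simp only [Prod.mk.injEq] at heq ⊢
    omega
  · rintro ⟨x, y, z⟩ ⟨⟨h, hy⟩, hxz⟩
    obtain ⟨h, hx⟩ := mem_solsB.1 h
    obtain ⟨h1, h2⟩ := parity_four_m h
    dsimp only at hxz hy
    obtain ⟨b, rfl⟩ : ∃ b, y = 2 * b := ⟨y / 2, by omega⟩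
    obtain ⟨t, ht⟩ : ∃ t, x = 32 * t - 7 * z := ⟨(x + 7 * z) / 32, by omega⟩
    subst ht
    refine ⟨(2 * z - 7 * t, b, -t), ⟨mem_sols.2 (by linarith), ?_⟩, ?_⟩
    · dsimp only; omega
    · simp only [Prod.mk.injEq, true_and]
      omega

theorem ncard_B_two_half (k : ℤ) :
    {p ∈ solsB k | 4 ∣ p.2.1}.ncard
      = 2 * {p ∈ {p ∈ solsB k | 4 ∣ p.2.1} | 4 ∣ p.1 + p.2.2}.ncard := by
  apply ncard_half ((finite_solsB k).subset (Set.sep_subset _ _)) _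
    (fun p => (p.1, p.2.1, -p.2.2))
  · simp
  · rintro ⟨x, y, z⟩ ⟨h, hy⟩
    rw [mem_solsB] at h
    refine ⟨?_, hy⟩
    rw [mem_solsB]
    simpa using h
  · rintro ⟨x, y, z⟩ ⟨h, hy⟩
    rw [mem_solsB] at h
    obtain ⟨h, hx⟩ := h
    obtain ⟨h1, h2⟩ := parity_four_m h
    dsimp only
    omega

/-- A solution `(a, b, c)` of `12 * a ^ 2 + 20 * b ^ 2 + 5 * c ^ 2 = 8 * k + 5` corresponds to
`((3 * a + 5 * b) / 2, c, (a - b) / 2)` on the right and to `(6 * a + 5 * c, 4 * b, 2 * a - c)` on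
the left. The bijection is the composite, written in terms of `s = (a + b) / 2`. -/
theorem ncard_B_two (k : ℤ) :
    {p ∈ {p ∈ solsB k | 4 ∣ p.2.1} | 4 ∣ p.1 + p.2.2}.ncard
      = {p ∈ sols 4 10 60 (16 * k + 10) | 4 ∣ p.1 + p.2.2}.ncard := by
  symm
  apply Set.ncard_congr
    (fun p _ => (6 * ((p.1 + p.2.2) / 4 + p.2.2) + 5 * p.2.1, 4 * ((p.1 + p.2.2) / 4 - p.2.2),
      2 * ((p.1 + p.2.2) / 4 + p.2.2) - p.2.1))
  · rintro ⟨x, y, z⟩ ⟨h, hxz⟩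
    rw [mem_sols] at h
    obtain ⟨h1, h2⟩ := parity_E h
    dsimp only at hxz
    obtain ⟨s, hs⟩ : ∃ s, x = 4 * s - z := ⟨(x + z) / 4, by omega⟩
    subst hs
    have hs : (4 * s - z + z) / 4 = s := by omega
    dsimp only
    rw [hs]
    refine ⟨⟨mem_solsB.2 ⟨by linarith, by omega⟩, ?_⟩, ?_⟩
    · dsimp only; omega
    · dsimp only; omega
  · rintro ⟨x, y, z⟩ ⟨x', y', z'⟩ ⟨_, h⟩ ⟨_, h'⟩ heq
    dsimp only at h h'
    simp only [Prod.mk.injEq] at heq ⊢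
    omega
  · rintro ⟨x, y, z⟩ ⟨⟨h, hy⟩, hxz⟩
    obtain ⟨h, hx⟩ := mem_solsB.1 h
    obtain ⟨h1, h2⟩ := parity_four_m h
    dsimp only at hxz hy
    obtain ⟨b, rfl⟩ := hy
    obtain ⟨t, ht⟩ : ∃ t, x = 4 * t - z := ⟨(x + z) / 4, by omega⟩
    subst ht
    have e1 : 2 * t ^ 2 - t * z + 2 * z ^ 2 + 20 * b ^ 2 = 8 * k + 5 := by linarith
    have ht : t % 2 = 1 := by
      rcases Int.emod_two_eq_zero_or_one t with h0 | h0
      · obtain ⟨u, rfl⟩ := Int.dvd_of_emod_eq_zero h0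
        have : 2 * (2 * u) ^ 2 - 2 * (u * z) + 2 * z ^ 2 + 20 * b ^ 2 = 8 * k + 5 := by linarith
        omega
      · exact h0
    obtain ⟨p, hp⟩ : ∃ p, t = 2 * p - z := ⟨(t + z) / 2, by omega⟩
    obtain ⟨q, hq⟩ : ∃ q, z = p - q := ⟨p - z, by ring⟩
    obtain rfl : t = p + q := by omega
    subst hq
    have e2 : 3 * p ^ 2 + 5 * q ^ 2 + 20 * b ^ 2 = 8 * k + 5 := by linarith
    have hpe : p % 2 = 0 := by
      rcases Int.emod_two_eq_zero_or_one p with h0 | h0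
      · exact h0
      · obtain ⟨u, hu⟩ := odd_sq h0
        obtain ⟨v, hv⟩ := even_sq (x := q) (by omega)
        omega
    obtain ⟨a, rfl⟩ := Int.dvd_of_emod_eq_zero hpe
    have hab : (a + b) % 2 = 0 := by
      obtain ⟨v, hv⟩ := odd_sq (x := q) (by omega)
      rcases Int.emod_two_eq_zero_or_one a with ha | ha <;>
      rcases Int.emod_two_eq_zero_or_one b with hb | hb
      · omega
      · obtain ⟨u, hu⟩ := odd_sq hb
        obtain ⟨w, hw⟩ := even_sq ha
        rw [mul_pow] at e2
        omega
      · obtain ⟨u, hu⟩ := odd_sq ha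
        obtain ⟨w, hw⟩ := even_sq hb
        rw [mul_pow] at e2
        omega
      · omega
    obtain ⟨s, hs⟩ : ∃ s, b = 2 * s - a := ⟨(a + b) / 2, by omega⟩
    subst hs
    refine ⟨(5 * s - a, q, a - s), ⟨mem_sols.2 (by linarith), ?_⟩, ?_⟩
    · dsimp only; omega
    · simp only [Prod.mk.injEq]
      omega

theorem ncard_B (k : ℤ) : (solsB k).ncard = 2 * (sols 4 10 60 (16 * k + 10)).ncard := by
  rw [ncard_split (finite_solsB k) (fun p => 4 ∣ p.2.1),
    ncard_split (finite_sols (16 * k + 10) (a := 4) (b := 10) (c := 60)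
      (by norm_num) (by norm_num) (by norm_num)) (fun p => 4 ∣ p.1 + p.2.2),
    ncard_B_one_half, ncard_B_one, ncard_B_two_half, ncard_B_two]
  ring

/-! ### Triangular numbers -/

theorem eight_mul_triangle (a : ℕ) : 8 * ((a * (a + 1) / 2 : ℕ) : ℤ) + 1 = (2 * a + 1) ^ 2 := by
  have h : a * (a + 1) / 2 * 2 = a * (a + 1) := Nat.div_mul_cancel (Nat.even_mul_succ_self a).two_dvd
  have h' : ((a * (a + 1) / 2 : ℕ) : ℤ) * 2 = a * (a + 1) := by exact_mod_cast h
  linarith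

theorem triangle_iff (n a b c : ℕ) :
    1 * (a * (a + 1) / 2) + 10 * (b * (b + 1) / 2) + 15 * (c * (c + 1) / 2) = n ↔
      1 * (2 * (a : ℤ) + 1) ^ 2 + 10 * (2 * (b : ℤ) + 1) ^ 2 + 15 * (2 * (c : ℤ) + 1) ^ 2
        = 8 * n + 26 := by
  rw [← eight_mul_triangle, ← eight_mul_triangle, ← eight_mul_triangle]
  omega

theorem ncard_pos (n : ℕ) :
    {p ∈ {p ∈ {p ∈ {p ∈ sols 1 10 15 (8 * n + 26) | p.1 % 2 = 1 ∧ p.2.1 % 2 = 1 ∧ p.2.2 % 2 = 1}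
      | 0 < p.1} | 0 < p.2.1} | 0 < p.2.2}.ncard = T 1 10 15 n := by
  rw [T]
  symm
  refine (Nat.card_coe_set_eq {p : ℕ × ℕ × ℕ | 1 * (p.1 * (p.1 + 1) / 2)
    + 10 * (p.2.1 * (p.2.1 + 1) / 2) + 15 * (p.2.2 * (p.2.2 + 1) / 2) = n}).trans ?_
  apply Set.ncard_congr
    (fun p _ => (2 * (p.1 : ℤ) + 1, 2 * (p.2.1 : ℤ) + 1, 2 * (p.2.2 : ℤ) + 1))
  · rintro ⟨a, b, c⟩ h
    have h := (triangle_iff n a b c).1 h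
    refine ⟨⟨⟨⟨mem_sols.2 h, ?_⟩, ?_⟩, ?_⟩, ?_⟩ <;> dsimp only <;> omega
  · rintro ⟨a, b, c⟩ ⟨a', b', c'⟩ _ _ h
    simp only [Prod.mk.injEq] at h ⊢
    omega
  · rintro ⟨x, y, z⟩ ⟨⟨⟨⟨h, hodd⟩, hx⟩, hy⟩, hz⟩
    dsimp only at hodd hx hy hz
    rw [mem_sols] at h
    obtain ⟨a, rfl⟩ : ∃ a : ℕ, x = 2 * a + 1 := ⟨(x / 2).toNat, by omega⟩
    obtain ⟨b, rfl⟩ : ∃ b : ℕ, y = 2 * b + 1 := ⟨(y / 2).toNat, by omega⟩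
    obtain ⟨c, rfl⟩ : ∃ c : ℕ, z = 2 * c + 1 := ⟨(z / 2).toNat, by omega⟩
    exact ⟨(a, b, c), (triangle_iff n a b c).2 h, rfl⟩

/-- Each solution counted by `T` gives eight odd solutions, one for each choice of signs. -/
theorem ncard_odd (n : ℕ) :
    {p ∈ sols 1 10 15 (8 * n + 26) | p.1 % 2 = 1 ∧ p.2.1 % 2 = 1 ∧ p.2.2 % 2 = 1}.ncard
      = 8 * T 1 10 15 n := by
  have hf : {p ∈ sols 1 10 15 (8 * n + 26) |
      p.1 % 2 = 1 ∧ p.2.1 % 2 = 1 ∧ p.2.2 % 2 = 1}.Finite :=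
    (finite_sols _ (by norm_num) (by norm_num) (by norm_num)).subset (Set.sep_subset _ _)
  rw [ncard_half hf (fun p => 0 < p.1) (fun p => (-p.1, p.2.1, p.2.2)),
    ncard_half (hf.subset (Set.sep_subset _ _)) (fun p => 0 < p.2.1)
      (fun p => (p.1, -p.2.1, p.2.2)),
    ncard_half ((hf.subset (Set.sep_subset _ _)).subset (Set.sep_subset _ _)) (fun p => 0 < p.2.2)
      (fun p => (p.1, p.2.1, -p.2.2)), ncard_pos]
  · ring
  · simp
  · rintro ⟨x, y, z⟩ ⟨⟨⟨h, hodd⟩, hx⟩, hy⟩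
    rw [mem_sols] at h
    dsimp only at hodd hx hy
    refine ⟨⟨⟨mem_sols.2 (by rw [neg_sq]; exact h), ?_⟩, ?_⟩, ?_⟩ <;> dsimp only <;> omega
  · rintro ⟨x, y, z⟩ ⟨⟨⟨h, hodd⟩, hx⟩, hy⟩
    dsimp only at hodd ⊢
    omega
  · simp
  · rintro ⟨x, y, z⟩ ⟨⟨h, hodd⟩, hx⟩
    rw [mem_sols] at h
    dsimp only at hodd hx
    refine ⟨⟨mem_sols.2 (by rw [neg_sq]; exact h), ?_⟩, ?_⟩ <;> dsimp only <;> omega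
  · rintro ⟨x, y, z⟩ ⟨⟨h, hodd⟩, hx⟩
    dsimp only at hodd ⊢
    omega
  · simp
  · rintro ⟨x, y, z⟩ ⟨h, hodd⟩
    rw [mem_sols] at h
    dsimp only at hodd
    refine ⟨mem_sols.2 (by rw [neg_sq]; exact h), ?_⟩
    dsimp only
    omega
  · rintro ⟨x, y, z⟩ ⟨h, hodd⟩
    dsimp only at hodd ⊢
    omega

theorem N_eq (m : ℕ) : N 1 10 15 m = (sols 1 10 15 m).ncard :=
  Nat.card_coe_set_eq (sols 1 10 15 m)

theorem stmt_15 (n : ℕ) (hn : 0 < n) (hpar : Even n) :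
    (16 * T 1 10 15 n : ℤ) = 3 * (N 1 10 15 (8 * n + 26) : ℤ) - (N 1 10 15 (4 * (8 * n + 26)) : ℤ) := by
  obtain ⟨j, hj⟩ := hpar
  have hm : (8 * (n : ℤ) + 26) = 16 * ((j : ℤ) + 1) + 10 := by omega
  have hT := ncard_odd n
  rw [N_eq, N_eq]
  push_cast
  rw [hm] at hT ⊢
  generalize (j : ℤ) + 1 = k at hT ⊢
  have hodd : {p ∈ sols 1 10 15 (16 * k + 10) | p.1 % 2 = 1}.ncard = 8 * T 1 10 15 n := by
    rw [← hT]
    congr 1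
    ext ⟨x, y, z⟩
    simp only [Set.mem_sep_iff]
    refine and_congr_right fun h => ?_
    have := parity_m (mem_sols.1 h)
    omega
  have h1 := ncard_split (finite_sols (16 * k + 10) (a := 1) (b := 10) (c := 15)
    (by norm_num) (by norm_num) (by norm_num)) (fun p => p.1 % 2 = 1)
  have h4 := ncard_split (finite_sols (4 * (16 * k + 10)) (a := 1) (b := 10) (c := 15)
    (by norm_num) (by norm_num) (by norm_num)) (fun p => p.1 % 2 = 1)
  rw [hodd, ncard_even_m] at h1
  rw [ncard_even_four_m] at h4
  have hB := ncard_B k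
  rw [solsB] at hB
  omega
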